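/- Let Y ∈ ℳ, μ ∈ ℝ^m, and S = C − 𝒜*(μ). Assume 𝒞 is compact with R = sup{Tr(X) : X ∈ 𝒞} < ∞, assume the identity matrix I_n lies in the image of 𝒜* (i.e., there is ν ∈ ℝ^m with ν_1 A_1 + ... + ν_m A_m = I_n), and assume 2 S Y ∈ T_Yℳ. If ε_H ≥ 0 is such that S + (ε_H/2) I_n is positive semidefinite, then 0 ≤ 2(Tr(C Y Yᵀ) − f*) ≤ ε_H R; in particular no bound on ‖2 S Y‖ is needed. -/

import Mathlib

open Matrix MeasureTheory

noncomputable section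

/-- Frobenius inner product `⟨A, B⟩ = Tr(Aᵀ B)`. -/
def frobInner {n p : ℕ} (A B : Matrix (Fin n) (Fin p) ℝ) : ℝ := (Aᵀ * B).trace

/-- Frobenius norm. -/
def frobNorm {n p : ℕ} (A : Matrix (Fin n) (Fin p) ℝ) : ℝ := Real.sqrt (frobInner A A)

/-- The constraint map 𝒜, `𝒜(X) i = Tr(A i * X)`. -/
def Aop {n m : ℕ} (A : Fin m → Matrix (Fin n) (Fin n) ℝ) (X : Matrix (Fin n) (Fin n) ℝ) :
    Fin m → ℝ := fun i => (A i * X).trace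

/-- The adjoint 𝒜*, `𝒜*(μ) = ∑ i, μ i • A i`. -/
def Aadj {n m : ℕ} (A : Fin m → Matrix (Fin n) (Fin n) ℝ) (μ : Fin m → ℝ) :
    Matrix (Fin n) (Fin n) ℝ := ∑ i, μ i • A i

/-- The SDP feasible set 𝒞. -/
def sdpFeas {n m : ℕ} (A : Fin m → Matrix (Fin n) (Fin n) ℝ) (b : Fin m → ℝ) :
    Set (Matrix (Fin n) (Fin n) ℝ) := {X | X.IsSymm ∧ Aop A X = b ∧ X.PosSemidef}

/-- Optimal value `f* = inf {Tr(C X) : X ∈ 𝒞}` of the SDP. -/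
def fstar {n m : ℕ} (A : Fin m → Matrix (Fin n) (Fin n) ℝ) (b : Fin m → ℝ)
    (C : Matrix (Fin n) (Fin n) ℝ) : ℝ := sInf ((fun X => (C * X).trace) '' sdpFeas A b)

/-- The factorized feasible set `ℳ_p = {Y : 𝒜(Y Yᵀ) = b}`. -/
def facFeas {n m : ℕ} (A : Fin m → Matrix (Fin n) (Fin n) ℝ) (b : Fin m → ℝ) (p : ℕ) :
    Set (Matrix (Fin n) (Fin p) ℝ) := {Y | Aop A (Y * Yᵀ) = b}

/-- Tangent space `T_Yℳ = {Ydot : 𝒜(Ydot Yᵀ + Y Ydotᵀ) = 0}`. -/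
def tangentSet {n m p : ℕ} (A : Fin m → Matrix (Fin n) (Fin n) ℝ)
    (Y : Matrix (Fin n) (Fin p) ℝ) : Set (Matrix (Fin n) (Fin p) ℝ) :=
  {Ydot | Aop A (Ydot * Yᵀ + Y * Ydotᵀ) = 0}

/-- Second-order critical point of the factorized problem. -/
def IsSOCP {n m p : ℕ} (A : Fin m → Matrix (Fin n) (Fin n) ℝ) (b : Fin m → ℝ)
    (C : Matrix (Fin n) (Fin n) ℝ) (Y : Matrix (Fin n) (Fin p) ℝ) : Prop :=
  Y ∈ facFeas A b p ∧ ∃ μ : Fin m → ℝ,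
    (C - Aadj A μ) * Y = 0 ∧
    ∀ Ydot ∈ tangentSet A Y, 0 ≤ frobInner Ydot ((C - Aadj A μ) * Ydot)

/-- The real vector space of symmetric `n × n` matrices. -/
def symmSpace (n : ℕ) : Submodule ℝ (Matrix (Fin n) (Fin n) ℝ) where
  carrier := {X | X.IsSymm}
  add_mem' := fun ha hb => ha.add hb
  zero_mem' := Matrix.isSymm_zero
  smul_mem' := fun c X hX => by
    show (c • X)ᵀ = c • X
    rw [Matrix.transpose_smul, hX]

instance (n : ℕ) : MeasurableSpace ↥(symmSpace n) := borel _

/-- A set of symmetric matrices is null if it has measure zero for every additive Haar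
measure on the finite-dimensional real vector space of symmetric `n × n` matrices. -/
def IsNullSymmSet (n : ℕ) (S : Set (Matrix (Fin n) (Fin n) ℝ)) : Prop :=
  ∀ μ : Measure ↥(symmSpace n), μ.IsAddHaarMeasure →
    μ {C : ↥(symmSpace n) | (C : Matrix (Fin n) (Fin n) ℝ) ∈ S} = 0

/-!
Since `I = 𝒜*(ν)`, the trace is constant on `𝒞`, equal to `R = ⟨ν, b⟩`, and every tangent vector
is orthogonal to `Y`. Tangency of `2 S Y` therefore gives `Tr(S Y Yᵀ) = 0`, that is,
`f(Y) = ⟨μ, b⟩`. The bound `S + (ε/2) I ⪰ 0` says that `μ - (ε/2) ν` is dual feasible, so weak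
duality yields `f* ≥ ⟨μ, b⟩ - (ε/2) ⟨ν, b⟩ = f(Y) - (ε/2) R`.
-/

section PosSemidef

open scoped ComplexOrder

theorem trace_mul_nonneg_of_posSemidef {ι 𝕜 : Type*} [Fintype ι] [RCLike 𝕜]
    {P Q : Matrix ι ι 𝕜} (hP : P.PosSemidef) (hQ : Q.PosSemidef) : 0 ≤ (P * Q).trace := by
  classical
  open scoped MatrixOrder in
  obtain ⟨B, rfl⟩ : ∃ B, Q = Bᴴ * B := CStarAlgebra.nonneg_iff_eq_star_mul_self.mp hQ.nonneg
  have hcycle : (P * (Bᴴ * B)).trace = (B * P * Bᴴ).trace := by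
    rw [← Matrix.mul_assoc, Matrix.trace_mul_cycle]
  exact hcycle ▸ (hP.mul_mul_conjTranspose_same B).trace_nonneg

end PosSemidef

section ConstraintMap

variable {n m p : ℕ} {A : Fin m → Matrix (Fin n) (Fin n) ℝ} {b ν : Fin m → ℝ}
  {Y V : Matrix (Fin n) (Fin p) ℝ}

theorem Aadj_sub (A : Fin m → Matrix (Fin n) (Fin n) ℝ) (μ ν : Fin m → ℝ) :
    Aadj A (μ - ν) = Aadj A μ - Aadj A ν := by
  simp only [Aadj, Pi.sub_apply, sub_smul, Finset.sum_sub_distrib]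

theorem Aadj_smul (A : Fin m → Matrix (Fin n) (Fin n) ℝ) (t : ℝ) (μ : Fin m → ℝ) :
    Aadj A (t • μ) = t • Aadj A μ := by
  simp only [Aadj, Pi.smul_apply, smul_assoc, Finset.smul_sum]

theorem sub_Aadj_sub_smul (hν : Aadj A ν = 1) (C : Matrix (Fin n) (Fin n) ℝ) (μ : Fin m → ℝ)
    (t : ℝ) : C - Aadj A (μ - t • ν) = C - Aadj A μ + t • 1 := by
  rw [Aadj_sub, Aadj_smul, hν, sub_sub_eq_add_sub, add_sub_right_comm]

theorem trace_Aadj_mul (A : Fin m → Matrix (Fin n) (Fin n) ℝ) (μ : Fin m → ℝ)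
    (X : Matrix (Fin n) (Fin n) ℝ) : (Aadj A μ * X).trace = μ ⬝ᵥ Aop A X := by
  simp only [Aadj, Aop, dotProduct, Matrix.sum_mul, Matrix.smul_mul, Matrix.trace_sum,
    Matrix.trace_smul, smul_eq_mul]

theorem trace_eq_dotProduct_Aop (hν : Aadj A ν = 1) (X : Matrix (Fin n) (Fin n) ℝ) :
    X.trace = ν ⬝ᵥ Aop A X := by
  rw [← trace_Aadj_mul, hν, Matrix.one_mul]

theorem trace_mul_eq_add_dotProduct_Aop (A : Fin m → Matrix (Fin n) (Fin n) ℝ) (μ : Fin m → ℝ)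
    (C X : Matrix (Fin n) (Fin n) ℝ) :
    (C * X).trace = ((C - Aadj A μ) * X).trace + μ ⬝ᵥ Aop A X := by
  rw [← trace_Aadj_mul, ← Matrix.trace_add, ← Matrix.add_mul, sub_add_cancel]

theorem sSup_trace_image_sdpFeas (hν : Aadj A ν = 1) (hne : (sdpFeas A b).Nonempty) :
    sSup (Matrix.trace '' sdpFeas A b) = ν ⬝ᵥ b := by
  have hconst : Set.EqOn Matrix.trace (fun _ => ν ⬝ᵥ b) (sdpFeas A b) := fun X hX => by
    rw [trace_eq_dotProduct_Aop hν, hX.2.1]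
  rw [hconst.image_eq, hne.image_const, csSup_singleton]

theorem mul_transpose_mem_sdpFeas (hY : Y ∈ facFeas A b p) : Y * Yᵀ ∈ sdpFeas A b :=
  ⟨by rw [Matrix.IsSymm, Matrix.transpose_mul, Matrix.transpose_transpose], hY, by
    simpa only [Matrix.conjTranspose_eq_transpose_of_trivial]
      using Matrix.posSemidef_self_mul_conjTranspose Y⟩

theorem trace_mul_transpose_eq_zero_of_mem_tangentSet (hν : Aadj A ν = 1)
    (hV : V ∈ tangentSet A Y) : (V * Yᵀ).trace = 0 := by
  have hzero : (V * Yᵀ + Y * Vᵀ).trace = 0 := by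
    rw [trace_eq_dotProduct_Aop hν, show Aop A (V * Yᵀ + Y * Vᵀ) = 0 from hV, dotProduct_zero]
  have hflip : (Y * Vᵀ).trace = (V * Yᵀ).trace := by
    rw [← Matrix.trace_transpose, Matrix.transpose_mul, Matrix.transpose_transpose]
  rw [Matrix.trace_add, hflip] at hzero
  linarith

end ConstraintMap

section WeakDuality

variable {n m : ℕ} {A : Fin m → Matrix (Fin n) (Fin n) ℝ} {b μ : Fin m → ℝ}
  {C X : Matrix (Fin n) (Fin n) ℝ}

theorem dotProduct_le_trace_mul_of_posSemidef (hμ : (C - Aadj A μ).PosSemidef)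
    (hX : X ∈ sdpFeas A b) : μ ⬝ᵥ b ≤ (C * X).trace := by
  rw [trace_mul_eq_add_dotProduct_Aop A μ, hX.2.1]
  exact le_add_of_nonneg_left (trace_mul_nonneg_of_posSemidef hμ hX.2.2)

theorem dotProduct_le_fstar_of_posSemidef (hμ : (C - Aadj A μ).PosSemidef)
    (hne : (sdpFeas A b).Nonempty) : μ ⬝ᵥ b ≤ fstar A b C :=
  le_csInf (hne.image _) <| Set.forall_mem_image.2 fun _ hX =>
    dotProduct_le_trace_mul_of_posSemidef hμ hX

-- Dual feasibility bounds the cost below; `sInf` of an unbounded set would be the junk value `0`.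
theorem fstar_le_trace_mul_of_posSemidef (hμ : (C - Aadj A μ).PosSemidef) (hX : X ∈ sdpFeas A b) :
    fstar A b C ≤ (C * X).trace :=
  csInf_le ⟨μ ⬝ᵥ b, Set.forall_mem_image.2 fun _ hZ => dotProduct_le_trace_mul_of_posSemidef hμ hZ⟩
    (Set.mem_image_of_mem _ hX)

end WeakDuality

theorem optimality_gap_bound_identity_in_range_general {n m p : ℕ}
    {A : Fin m → Matrix (Fin n) (Fin n) ℝ} {b μ ν : Fin m → ℝ} {C : Matrix (Fin n) (Fin n) ℝ}
    {Y : Matrix (Fin n) (Fin p) ℝ} (hY : Y ∈ facFeas A b p) (hν : Aadj A ν = 1)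
    (htan : (2 : ℝ) • ((C - Aadj A μ) * Y) ∈ tangentSet A Y) {ε : ℝ}
    (hhess : (C - Aadj A μ + (ε / 2) • (1 : Matrix (Fin n) (Fin n) ℝ)).PosSemidef) :
    0 ≤ 2 * ((C * (Y * Yᵀ)).trace - fstar A b C) ∧
    2 * ((C * (Y * Yᵀ)).trace - fstar A b C) ≤ ε * sSup (Matrix.trace '' sdpFeas A b) := by
  have hYY : Y * Yᵀ ∈ sdpFeas A b := mul_transpose_mem_sdpFeas hY
  have hdual : (C - Aadj A (μ - (ε / 2) • ν)).PosSemidef := by rwa [sub_Aadj_sub_smul hν]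
  have hcompl : ((C - Aadj A μ) * (Y * Yᵀ)).trace = 0 := by
    simpa [Matrix.mul_assoc] using trace_mul_transpose_eq_zero_of_mem_tangentSet hν htan
  have hcost : (C * (Y * Yᵀ)).trace = μ ⬝ᵥ b := by
    rw [trace_mul_eq_add_dotProduct_Aop A μ, hcompl, zero_add, hYY.2.1]
  have hupper : fstar A b C ≤ (C * (Y * Yᵀ)).trace := fstar_le_trace_mul_of_posSemidef hdual hYY
  have hlower : μ ⬝ᵥ b - ε / 2 * (ν ⬝ᵥ b) ≤ fstar A b C := by
    simpa only [sub_dotProduct, smul_dotProduct, smul_eq_mul]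
      using dotProduct_le_fstar_of_posSemidef hdual ⟨_, hYY⟩
  rw [sSup_trace_image_sdpFeas hν ⟨_, hYY⟩]
  constructor <;> linarith

/-- refined optimality gap bound when `I ∈ im(𝒜*)` and `2 S Y` is tangent:
`0 ≤ 2(f(Y) − f*) ≤ ε_H R`, with no bound on the gradient needed. -/
theorem optimality_gap_bound_identity_in_range
    (n m p : ℕ) (hn : 0 < n) (hm : 0 < m) (hp : 0 < p)
    (A : Fin m → Matrix (Fin n) (Fin n) ℝ) (hA : ∀ i, (A i).IsSymm) (b : Fin m → ℝ)
    (C : Matrix (Fin n) (Fin n) ℝ) (hC : C.IsSymm)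
    (Y : Matrix (Fin n) (Fin p) ℝ) (hY : Y ∈ facFeas A b p)
    (μ : Fin m → ℝ) (S : Matrix (Fin n) (Fin n) ℝ) (hS : S = C - Aadj A μ)
    (hcompact : IsCompact (sdpFeas A b))
    (R : ℝ) (hR : R = sSup (Matrix.trace '' sdpFeas A b))
    (hI : ∃ ν : Fin m → ℝ, Aadj A ν = 1)
    (htan : (2 : ℝ) • (S * Y) ∈ tangentSet A Y)
    (εH : ℝ) (hεH : 0 ≤ εH)
    (hhess : (S + (εH / 2) • (1 : Matrix (Fin n) (Fin n) ℝ)).PosSemidef) :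
    0 ≤ 2 * ((C * (Y * Yᵀ)).trace - fstar A b C) ∧
    2 * ((C * (Y * Yᵀ)).trace - fstar A b C) ≤ εH * R := by
  subst hS hR
  obtain ⟨ν, hν⟩ := hI
  exact optimality_gap_bound_identity_in_range_general hY hν htan hhess

end
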